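/- Let γ > 0, let S be a three-element set, and let P : S → ℝ satisfy P(x) > 0 for all x ∈ S and ∑_{x∈S} P(x) = 1. Suppose α > 0 and Q* : S → ℝ satisfy 0 < Q*(x) < 1, L'_γ(Q*(x)) = -α/P(x) for all x ∈ S, and ∑_{x∈S} Q*(x) = 1. Then for any x₀ ∈ S with P(x₀) = max_{x∈S} P(x), one has Q*(x₀) ≤ P(x₀). -/

import Mathlib

/-- The closed form of the first derivative of the focal-loss,
`L'_γ(p) = -(1-p)^(γ-1) (γ log(1/p) + (1-p)/p)`. -/
noncomputable def focalLossDeriv (γ p : ℝ) : ℝ :=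
  -((1 - p) ^ (γ - 1) * (γ * Real.log (1 / p) + (1 - p) / p))

/-!
Write `r_γ(q) = -q L'_γ(q)`, so that stationarity reads `r_γ(Q* x) = α Q* x / P x`. If `r_γ ∘ Q*` is
smallest at `x₀`, then `P / Q*` is largest there, and since `P` and `Q*` have the same mass,
`Q* x₀ ≤ P x₀`. Monotonicity of `L'_γ` shows that `Q*` is maximal at `x₀`, so on three points
`1 ≤ Q* x + 2 Q* x₀` for every `x`. It remains to see that `r_γ(a) ≤ r_γ(p)` whenever `p ≤ a` and
`1 ≤ p + 2a`. As `r_γ(q) = (1 - q)^γ (1 + γ q log q / (q - 1))`, this follows for all `γ ≥ 0` from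
the same inequality between the derivatives `k(q)` of `log r_γ(q)` at `γ = 0`. Now `k` decreases on
`[1/4, 1)`, and for `p ≤ 1/4` one has `k(a) ≤ k((1 - p)/2) ≤ p log 2 ≤ k(p)`.
-/

namespace FocalEntropy

open Real Set

theorem antitoneOn_log_div_sub_one :
    AntitoneOn (fun x : ℝ => log x / (x - 1)) (Ioi 0 \ {1}) := by
  refine (strictConcaveOn_log_Ioi.concaveOn.slope_anti (mem_Ioi.2 one_pos)).congr fun x _ => ?_
  simp [slope_def_field]

theorem log_div_sub_one_nonneg {x : ℝ} (hx : 0 < x) : 0 ≤ log x / (x - 1) := by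
  rcases le_total x 1 with hx1 | hx1
  · exact div_nonneg_of_nonpos (log_nonpos hx.le hx1) (sub_nonpos.2 hx1)
  · exact div_nonneg (log_nonneg hx1) (sub_nonneg.2 hx1)

theorem log_quarter_div_sub_one : log (1 / 4) / (1 / 4 - 1) = 8 / 3 * log 2 := by
  rw [one_div, log_inv, show (4 : ℝ) = 2 ^ 2 by norm_num, log_pow]
  push_cast
  ring

theorem rpow_mul_one_add_mul_le {x y a b γ : ℝ} (hx : 0 < x) (hxy : x ≤ y) (hb : 0 ≤ b)
    (hγ : 0 ≤ γ) (h : log x + a ≤ log y + b) :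
    x ^ γ * (1 + γ * a) ≤ y ^ γ * (1 + γ * b) := by
  have hy : 0 < y := hx.trans_le hxy
  set d := log y - log x with hd
  have hd0 : 0 ≤ d := sub_nonneg.2 (log_le_log hx hxy)
  have hγb : 0 ≤ γ * b := mul_nonneg hγ hb
  have hpow : x ^ γ * exp (γ * d) = y ^ γ := by
    rw [rpow_def_of_pos hx, rpow_def_of_pos hy, ← exp_add, hd]
    ring_nf
  calc x ^ γ * (1 + γ * a)
      ≤ x ^ γ * (1 + γ * (d + b)) := by gcongr; linarith
    _ ≤ x ^ γ * ((γ * d + 1) * (1 + γ * b)) := by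
        gcongr
        linarith [mul_nonneg (mul_nonneg hγ hd0) hγb]
    _ ≤ x ^ γ * (exp (γ * d) * (1 + γ * b)) := by gcongr; exact add_one_le_exp _
    _ = y ^ γ * (1 + γ * b) := by rw [← mul_assoc, hpow]

theorem sum_le_add_card_sub_one_mul {ι : Type*} [Fintype ι] {Q : ι → ℝ} {M : ℝ}
    (hQ : ∀ x, Q x ≤ M) (x : ι) : ∑ y, Q y ≤ Q x + (Fintype.card ι - 1) * M := by
  classical
  have hrest := Finset.sum_le_card_nsmul (Finset.univ.erase x) Q M fun y _ => hQ y
  have hcard : ((Finset.univ.erase x).card : ℝ) = Fintype.card ι - 1 := by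
    rw [Finset.cast_card_erase_of_mem (Finset.mem_univ x), Finset.card_univ]
  rw [← Finset.add_sum_erase _ Q (Finset.mem_univ x), ← hcard, ← nsmul_eq_mul]
  gcongr

theorem le_of_forall_mul_le_mul {ι : Type*} [Fintype ι] {P Q : ι → ℝ} (hP : ∑ x, P x = 1)
    (hQ : ∑ x, Q x = 1) {x₀ : ι} (h : ∀ x, Q x₀ * P x ≤ P x₀ * Q x) : Q x₀ ≤ P x₀ := by
  simpa [← Finset.mul_sum, hP, hQ] using Finset.sum_le_sum fun x (_ : x ∈ Finset.univ) => h x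

/-- The derivative in `γ` at `γ = 0` of `log (-q L'_γ(q))`: comparing it at two points `p ≤ a`
compares `-q L'_γ(q)` there for all `γ ≥ 0` at once. -/
noncomputable def focalLogRate (q : ℝ) : ℝ := log (1 - q) + q * (log q / (q - 1))

theorem antitoneOn_focalLogRate_div : AntitoneOn (fun q => focalLogRate q / q) (Ioo 0 1) := by
  have hsplit {q : ℝ} (hq : 0 < q) :
      focalLogRate q / q = log q / (q - 1) - log (1 - q) / (1 - q - 1) := by
    rw [focalLogRate, sub_sub_cancel_left, div_neg, add_div, mul_div_cancel_left₀ _ hq.ne']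
    ring
  intro p ⟨hp0, hp1⟩ q ⟨hq0, hq1⟩ hpq
  have hslope : log q / (q - 1) ≤ log p / (p - 1) :=
    antitoneOn_log_div_sub_one ⟨hp0, hp1.ne⟩ ⟨hq0, hq1.ne⟩ hpq
  have hslope' : log (1 - p) / (1 - p - 1) ≤ log (1 - q) / (1 - q - 1) :=
    antitoneOn_log_div_sub_one ⟨sub_pos.2 hq1, (sub_lt_self 1 hq0).ne⟩
      ⟨sub_pos.2 hp1, (sub_lt_self 1 hp0).ne⟩ (sub_le_sub_left hpq 1)
  simp only [hsplit hp0, hsplit hq0]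
  exact sub_le_sub hslope hslope'

theorem hasDerivAt_focalLogRate {q : ℝ} (hq0 : q ≠ 0) (hq1 : q ≠ 1) :
    HasDerivAt focalLogRate ((log q / (q - 1) - 2) / (1 - q)) q := by
  have hne : q - 1 ≠ 0 := sub_ne_zero.2 hq1
  have hne' : 1 - q ≠ 0 := sub_ne_zero.2 hq1.symm
  have hlog := ((hasDerivAt_id' q).const_sub 1).log hne'
  have hslope := (hasDerivAt_log hq0).div ((hasDerivAt_id' q).sub_const 1) hne
  refine (hlog.add ((hasDerivAt_id' q).mul hslope)).congr_deriv ?_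
  simp only [Pi.div_apply, ← neg_sub 1 q]
  field_simp
  ring

theorem antitoneOn_focalLogRate : AntitoneOn focalLogRate (Ico (1 / 4) 1) := by
  have hderiv {q : ℝ} (hq : q ∈ Ico (1 / 4 : ℝ) 1) :=
    hasDerivAt_focalLogRate (show 0 < q by linarith [hq.1]).ne' hq.2.ne
  refine antitoneOn_of_hasDerivWithinAt_nonpos (convex_Ico _ _)
    (fun q hq => (hderiv hq).continuousAt.continuousWithinAt)
    (fun q hq => (hderiv (interior_subset hq)).hasDerivWithinAt) fun q hq => ?_
  obtain ⟨hq0, hq1⟩ := interior_subset hq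
  have hslope : log q / (q - 1) ≤ log (1 / 4) / (1 / 4 - 1) :=
    antitoneOn_log_div_sub_one (by norm_num) ⟨mem_Ioi.2 (by linarith), hq1.ne⟩ hq0
  rw [log_quarter_div_sub_one] at hslope
  exact div_nonpos_of_nonpos_of_nonneg (by linarith [log_two_lt_d9]) (by linarith)

theorem mul_log_two_le_focalLogRate {p : ℝ} (hp0 : 0 < p) (hp : p ≤ 1 / 4) :
    p * log 2 ≤ focalLogRate p := by
  have hquarter : log 2 ≤ focalLogRate (1 / 4) / (1 / 4) := by
    have hlog : log (1 - 1 / 4) = log 3 - 2 * log 2 := by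
      rw [show (1 - 1 / 4 : ℝ) = 3 / 2 ^ 2 by norm_num, log_div three_ne_zero (by norm_num),
        log_pow, Nat.cast_ofNat]
    rw [focalLogRate, log_quarter_div_sub_one, hlog]
    linarith [log_two_lt_d9, log_three_gt_d9]
  have hanti : focalLogRate (1 / 4) / (1 / 4) ≤ focalLogRate p / p :=
    antitoneOn_focalLogRate_div ⟨hp0, by linarith⟩ (by norm_num) hp
  rw [mul_comm, ← le_div_iff₀ hp0]
  exact hquarter.trans hanti

theorem focalLogRate_half_sub_le {p : ℝ} (hp0 : 0 ≤ p) (hp : p ≤ 1 / 4) :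
    focalLogRate ((1 - p) / 2) ≤ p * log 2 := by
  -- Tangents at `1 / 2` of `log` and of `q ↦ q log q`.
  have hlog : log (1 - (1 - p) / 2) ≤ p - log 2 := by
    have h := log_le_sub_one_of_pos (show 0 < 1 + p by linarith)
    rw [show 1 - (1 - p) / 2 = (1 + p) / 2 by ring, log_div (by linarith) two_ne_zero]
    linarith
  have hmul : -((1 - p) / 2 * log ((1 - p) / 2)) ≤ ((1 - p) * log 2 + p) / 2 := by
    have h := self_sub_one_le_mul_log (show 0 ≤ 1 - p by linarith)
    rw [log_div (by linarith) two_ne_zero]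
    linarith
  have hslope : (1 - p) / 2 * (log ((1 - p) / 2) / ((1 - p) / 2 - 1))
      ≤ ((1 - p) * log 2 + p) / (1 + p) := by
    calc (1 - p) / 2 * (log ((1 - p) / 2) / ((1 - p) / 2 - 1))
        = -((1 - p) / 2 * log ((1 - p) / 2)) / ((1 + p) / 2) := by
          rw [show (1 - p) / 2 - 1 = -((1 + p) / 2) by ring, div_neg, mul_neg, mul_div_assoc',
            neg_div]
      _ ≤ ((1 - p) * log 2 + p) / 2 / ((1 + p) / 2) := by gcongr
      _ = ((1 - p) * log 2 + p) / (1 + p) := div_div_div_cancel_right₀ two_ne_zero _ _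
  have hbound : ((1 - p) * log 2 + p) / (1 + p) ≤ p * log 2 + log 2 - p := by
    have hfactor : 0 ≤ 3 * log 2 - 2 - p * (1 - log 2) := by
      have := mul_le_mul_of_nonneg_right hp (show 0 ≤ 1 - log 2 by linarith [log_two_lt_d9])
      linarith [log_two_gt_d9]
    rw [div_le_iff₀ (by linarith)]
    linarith [mul_nonneg hp0 hfactor]
  rw [focalLogRate]
  linarith

theorem focalLogRate_le_focalLogRate {p a : ℝ} (hp : 0 < p) (hpa : p ≤ a) (ha : a < 1)
    (h : 1 ≤ p + 2 * a) : focalLogRate a ≤ focalLogRate p := by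
  rcases le_total (1 / 4) p with hp4 | hp4
  · exact antitoneOn_focalLogRate ⟨hp4, hpa.trans_lt ha⟩ ⟨hp4.trans hpa, ha⟩ hpa
  · calc focalLogRate a
        ≤ focalLogRate ((1 - p) / 2) :=
          antitoneOn_focalLogRate ⟨by linarith, by linarith⟩ ⟨by linarith, ha⟩ (by linarith)
      _ ≤ p * log 2 := focalLogRate_half_sub_le hp.le hp4
      _ ≤ focalLogRate p := mul_log_two_le_focalLogRate hp hp4

theorem focalLossDeriv_eq {γ q : ℝ} (hq0 : q ≠ 0) (hq1 : q ≠ 1) :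
    focalLossDeriv γ q = -((1 - q) ^ γ * (q⁻¹ + γ * (log q / (q - 1)))) := by
  have hne : 1 - q ≠ 0 := sub_ne_zero.2 hq1.symm
  rw [focalLossDeriv, rpow_sub_one hne, one_div, log_inv, ← neg_sub 1 q]
  field_simp
  ring

theorem strictMonoOn_focalLossDeriv {γ : ℝ} (hγ : 0 ≤ γ) :
    StrictMonoOn (focalLossDeriv γ) (Ioo 0 1) := by
  intro p ⟨hp0, hp1⟩ q ⟨hq0, hq1⟩ hpq
  have hslope : log q / (q - 1) ≤ log p / (p - 1) :=
    antitoneOn_log_div_sub_one ⟨hp0, hp1.ne⟩ ⟨hq0, hq1.ne⟩ hpq.le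
  have hpow : (1 - q) ^ γ ≤ (1 - p) ^ γ := by gcongr
  have hinv : q⁻¹ < p⁻¹ := inv_strictAnti₀ hp0 hpq
  have hfactor_pos : 0 ≤ q⁻¹ + γ * (log q / (q - 1)) :=
    add_nonneg (inv_nonneg.2 hq0.le) (mul_nonneg hγ (log_div_sub_one_nonneg hq0))
  rw [focalLossDeriv_eq hp0.ne' hp1.ne, focalLossDeriv_eq hq0.ne' hq1.ne, neg_lt_neg_iff]
  exact mul_lt_mul' hpow (add_lt_add_of_lt_of_le hinv (mul_le_mul_of_nonneg_left hslope hγ))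
    hfactor_pos (rpow_pos_of_pos (sub_pos.2 hp1) γ)

theorem mul_focalLossDeriv_le_mul_focalLossDeriv {γ p a : ℝ} (hγ : 0 ≤ γ) (hp : 0 < p)
    (hpa : p ≤ a) (ha : a < 1) (h : 1 ≤ p + 2 * a) :
    p * focalLossDeriv γ p ≤ a * focalLossDeriv γ a := by
  have hmul {q : ℝ} (hq0 : 0 < q) (hq1 : q < 1) :
      q * focalLossDeriv γ q = -((1 - q) ^ γ * (1 + γ * (q * (log q / (q - 1))))) := by
    rw [focalLossDeriv_eq hq0.ne' hq1.ne]
    linear_combination (-(1 - q) ^ γ) * mul_inv_cancel₀ hq0.ne'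
  rw [hmul hp (hpa.trans_lt ha), hmul (hp.trans_le hpa) ha, neg_le_neg_iff]
  exact rpow_mul_one_add_mul_le (sub_pos.2 ha) (sub_le_sub_left hpa 1)
    (mul_nonneg hp.le (log_div_sub_one_nonneg hp)) hγ (focalLogRate_le_focalLogRate hp hpa ha h)

end FocalEntropy

open FocalEntropy in
theorem focalEntropy_minimizer_three_point_max_general
    {ι : Type*} [Fintype ι] (hcard : Fintype.card ι ≤ 3) {γ : ℝ} (hγ : 0 ≤ γ)
    {P : ι → ℝ} (hP : ∀ x, 0 < P x) (hPsum : ∑ x, P x = 1) {α : ℝ} (hα : 0 < α)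
    {Q : ι → ℝ} (hQ : ∀ x, 0 < Q x ∧ Q x < 1 ∧ focalLossDeriv γ (Q x) = -α / P x)
    (hQsum : ∑ x, Q x = 1) {x₀ : ι} (hx₀ : ∀ x, P x ≤ P x₀) : Q x₀ ≤ P x₀ := by
  have hQmem (x : ι) : Q x ∈ Set.Ioo 0 1 := ⟨(hQ x).1, (hQ x).2.1⟩
  have hderiv (x : ι) : focalLossDeriv γ (Q x) = -α / P x := (hQ x).2.2
  have hQmax (x : ι) : Q x ≤ Q x₀ := by
    rw [← (strictMonoOn_focalLossDeriv hγ).le_iff_le (hQmem x) (hQmem x₀), hderiv, hderiv,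
      neg_div, neg_div, neg_le_neg_iff]
    exact div_le_div_of_nonneg_left hα.le (hP x) (hx₀ x)
  have hmass (x : ι) : 1 ≤ Q x + 2 * Q x₀ := by
    have hcard' : (Fintype.card ι : ℝ) ≤ 3 := mod_cast hcard
    have hrest := mul_le_mul_of_nonneg_right hcard' (hQmem x₀).1.le
    linarith [sum_le_add_card_sub_one_mul hQmax x]
  refine le_of_forall_mul_le_mul hPsum hQsum fun x => ?_
  have hratio : Q x * (-α / P x) ≤ Q x₀ * (-α / P x₀) := by
    rw [← hderiv, ← hderiv]
    exact mul_focalLossDeriv_le_mul_focalLossDeriv hγ (hQmem x).1 (hQmax x) (hQmem x₀).2 (hmass x)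
  rw [← mul_div_assoc, ← mul_div_assoc, div_le_div_iff₀ (hP x) (hP x₀)] at hratio
  exact le_of_mul_le_mul_left (by linarith) hα

/-- on a three-point support, the focal-entropy minimizer does not
increase the maximum probability: if `P x₀` is maximal then `Q* x₀ ≤ P x₀`. -/
theorem focalEntropy_minimizer_three_point_max
    {ι : Type*} [Fintype ι] (hcard : Fintype.card ι = 3)
    (γ : ℝ) (hγ : 0 < γ)
    (P : ι → ℝ) (hP : ∀ x, 0 < P x) (hPsum : ∑ x, P x = 1)
    (α : ℝ) (hα : 0 < α)
    (Qstar : ι → ℝ)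
    (hQstar : ∀ x, 0 < Qstar x ∧ Qstar x < 1 ∧
      focalLossDeriv γ (Qstar x) = -α / P x)
    (hQstarsum : ∑ x, Qstar x = 1) :
    ∀ x₀ : ι, (∀ x, P x ≤ P x₀) → Qstar x₀ ≤ P x₀ := fun _ hx₀ =>
  focalEntropy_minimizer_three_point_max_general hcard.le hγ.le hP hPsum hα hQstar hQstarsum hx₀
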